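/- Let D and D′ be ρ×κ diagonal integer matrices, each with non-negative diagonal entries forming a decreasing divisibility chain (entry j divides entry j−1 for all j ≥ 1). Suppose that the kernels of the induced homomorphisms f_D, f_{D′} : A^ρ → A^κ are isomorphic for A = ℚ and for A = ℤ/mℤ for every integer m > 1. Then D = D′. -/

import Mathlib

/-!
Over a finite cyclic group of order `m`, the kernel attached to a diagonal matrix with diagonal
`d` has `∏ i, gcd(m, d i)` elements, where a row beyond the last column counts as `d i = 0`.
These products for all prime powers `m` recover the diagonal up to sign, starting from its last
entry: once all entries after the `k`-th are known to agree, let `m` divide `d k`. Then `m` divides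
every earlier `d i`, so each factor `gcd(m, d i)` is at least its counterpart `gcd(m, d' i)`.
Equality of the products forces equality of the factors, and the `k`-th one gives `m ∣ d' k`.
-/

/-- The group homomorphism `f_M : A^ρ → A^κ` induced by an integer matrix `M`,
given by `f_M(x)_j = ∑ i, M i j • x i`. -/
def matHom {ρ κ : ℕ} (A : Type*) [AddCommGroup A] (M : Matrix (Fin ρ) (Fin κ) ℤ) :
    (Fin ρ → A) →+ (Fin κ → A) where
  toFun x := fun j => ∑ i, M i j • x i
  map_zero' := by funext j; simp
  map_add' x y := by funext j; simp [smul_add, Finset.sum_add_distrib]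

section Gcd

variable {ι : Type*} [Fintype ι] {c c' : ι → ℕ}

theorem dvd_of_prod_gcd_eq {m : ℕ} (hm : 0 < m)
    (hprod : ∏ i, m.gcd (c i) = ∏ i, m.gcd (c' i)) (hcc' : ∀ i, m ∣ c i ∨ c i = c' i)
    {k : ι} (hk : m ∣ c k) : m ∣ c' k := by
  have hle (i : ι) : m.gcd (c' i) ≤ m.gcd (c i) := by
    rcases hcc' i with hi | hi
    · rw [Nat.gcd_eq_left hi]
      exact Nat.gcd_le_left _ hm
    · rw [hi]
  by_contra hk'
  have hlt : m.gcd (c' k) < m.gcd (c k) :=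
    (hle k).lt_of_ne fun h => hk' (Nat.gcd_eq_left_iff_dvd.1 (h.trans (Nat.gcd_eq_left hk)))
  exact (Finset.prod_lt_prod (fun i _ => Nat.gcd_pos_of_pos_left _ hm) (fun i _ => hle i)
    ⟨k, Finset.mem_univ k, hlt⟩).ne' hprod

theorem dvd_of_forall_isPrimePow_dvd {a b : ℕ}
    (h : ∀ m : ℕ, IsPrimePow m → m ∣ a → m ∣ b) : a ∣ b := by
  refine (Nat.dvd_iff_prime_pow_dvd_dvd b a).2 fun p k hp hdvd => ?_
  rcases k.eq_zero_or_pos with rfl | hk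
  · simp
  · exact h _ (hp.isPrimePow.pow hk.ne') hdvd

variable [LinearOrder ι] {s : Set ι}

theorem dvd_of_prod_gcd_eq_of_eq_above
    (hc : ∀ i j, i ≤ j → j ∈ s → c j ∣ c i)
    (hprod : ∀ m : ℕ, IsPrimePow m → ∏ i, m.gcd (c i) = ∏ i, m.gcd (c' i))
    {k : ι} (hk : k ∈ s) (habove : ∀ i, k < i → c i = c' i) : c k ∣ c' k :=
  dvd_of_forall_isPrimePow_dvd fun m hm hmk =>
    dvd_of_prod_gcd_eq hm.pos (hprod m hm)
      (fun i => (le_or_gt i k).imp (fun hik => hmk.trans (hc i k hik hk)) (habove i)) hmk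

theorem eq_of_prod_gcd_eq_of_dvd_chain
    (hc : ∀ i j, i ≤ j → j ∈ s → c j ∣ c i) (hc' : ∀ i j, i ≤ j → j ∈ s → c' j ∣ c' i)
    (hs : ∀ i ∉ s, c i = c' i)
    (hprod : ∀ m : ℕ, IsPrimePow m → ∏ i, m.gcd (c i) = ∏ i, m.gcd (c' i)) : c = c' := by
  funext k
  induction k using WellFoundedGT.induction with
  | ind k ih =>
    by_cases hk : k ∈ s
    · exact Nat.dvd_antisymm
        (dvd_of_prod_gcd_eq_of_eq_above hc hprod hk ih)
        (dvd_of_prod_gcd_eq_of_eq_above hc' (fun m hm => (hprod m hm).symm) hk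
          fun i hi => (ih i hi).symm)
    · exact hs k hk

end Gcd

section Diagonal

variable {R : Type*} {ρ κ : ℕ}

/-- A rectangular matrix is diagonal. Mathlib's `Matrix.IsDiag` covers only square matrices;
here row and column indices are compared as natural numbers. -/
def IsRectDiag [Zero R] (M : Matrix (Fin ρ) (Fin κ) R) : Prop :=
  ∀ (i : Fin ρ) (j : Fin κ), (i : ℕ) ≠ (j : ℕ) → M i j = 0

/-- Along the main diagonal of a rectangular matrix, every entry divides the preceding one,
which is opposite to the usual convention for Smith normal forms. -/
def HasDvdChainDiag [Dvd R] (M : Matrix (Fin ρ) (Fin κ) R) : Prop :=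
  ∀ (k : ℕ) (hk1 : k + 1 < ρ) (hk2 : k + 1 < κ),
    M ⟨k + 1, hk1⟩ ⟨k + 1, hk2⟩ ∣ M ⟨k, Nat.lt_of_succ_lt hk1⟩ ⟨k, Nat.lt_of_succ_lt hk2⟩

/-- The entry of a rectangular matrix on the main diagonal in row `i`, set to `0` in the rows
beyond the last column so that every coordinate of `A^ρ` has a coefficient. -/
def diagEntry [Zero R] (M : Matrix (Fin ρ) (Fin κ) R) (i : Fin ρ) : R :=
  if h : (i : ℕ) < κ then M i ⟨i, h⟩ else 0

theorem diagEntry_of_lt [Zero R] (M : Matrix (Fin ρ) (Fin κ) R) {i : Fin ρ} (h : (i : ℕ) < κ) :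
    diagEntry M i = M i ⟨i, h⟩ :=
  dif_pos h

theorem diagEntry_of_not_lt [Zero R] (M : Matrix (Fin ρ) (Fin κ) R) {i : Fin ρ}
    (h : ¬(i : ℕ) < κ) : diagEntry M i = 0 :=
  dif_neg h

theorem diagEntry_eq_of_val_eq [Zero R] (M : Matrix (Fin ρ) (Fin κ) R) {i : Fin ρ} {j : Fin κ}
    (hij : (i : ℕ) = j) : diagEntry M i = M i j := by
  rw [diagEntry_of_lt M (hij.trans_lt j.isLt)]
  exact congrArg (M i) (Fin.ext hij)

theorem IsRectDiag.ext_diagEntry [Zero R] {M M' : Matrix (Fin ρ) (Fin κ) R} (hM : IsRectDiag M)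
    (hM' : IsRectDiag M') (h : ∀ i, diagEntry M i = diagEntry M' i) : M = M' := by
  ext i j
  by_cases hij : (i : ℕ) = j
  · rw [← diagEntry_eq_of_val_eq M hij, h, diagEntry_eq_of_val_eq M' hij]
  · rw [hM i j hij, hM' i j hij]

theorem diagEntry_nonneg [Zero R] [Preorder R] {M : Matrix (Fin ρ) (Fin κ) R}
    (hM : ∀ (i : Fin ρ) (j : Fin κ), (i : ℕ) = (j : ℕ) → 0 ≤ M i j) (i : Fin ρ) :
    0 ≤ diagEntry M i := by
  unfold diagEntry
  split_ifs with h
  · exact hM i ⟨i, h⟩ rfl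
  · exact le_rfl

theorem HasDvdChainDiag.diagEntry_dvd [MonoidWithZero R] {M : Matrix (Fin ρ) (Fin κ) R}
    (hM : HasDvdChainDiag M) {i j : Fin ρ} (hij : i ≤ j) (hj : (j : ℕ) < κ) :
    diagEntry M j ∣ diagEntry M i := by
  obtain ⟨i, hi⟩ := i
  obtain ⟨j, hjρ⟩ := j
  simp only [Fin.mk_le_mk] at hij hj
  induction j, hij using Nat.le_induction with
  | base => rfl
  | succ k _ ih =>
    refine dvd_trans ?_ (ih (by omega) (by omega))
    rw [diagEntry_of_lt M hj, diagEntry_of_lt M (Nat.lt_of_succ_lt hj)]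
    exact hM k hjρ hj

end Diagonal

section Kernel

variable {ρ κ : ℕ} {A : Type*} [AddCommGroup A] {M : Matrix (Fin ρ) (Fin κ) ℤ}

theorem matHom_apply (M : Matrix (Fin ρ) (Fin κ) ℤ) (x : Fin ρ → A) (j : Fin κ) :
    matHom A M x j = ∑ i, M i j • x i :=
  rfl

theorem IsRectDiag.matHom_apply_of_val_eq (hM : IsRectDiag M) (x : Fin ρ → A) {i : Fin ρ}
    {j : Fin κ} (hij : (i : ℕ) = j) : matHom A M x j = diagEntry M i • x i := by
  calc matHom A M x j
      = ∑ l, M l j • x l := matHom_apply M x j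
    _ = M i j • x i :=
        Fintype.sum_eq_single i fun l hl => by
          rw [hM l j fun hlj => hl (Fin.ext (hlj.trans hij.symm)), zero_smul]
    _ = diagEntry M i • x i := by rw [diagEntry_eq_of_val_eq M hij]

theorem IsRectDiag.matHom_apply_of_le (hM : IsRectDiag M) (x : Fin ρ → A) {j : Fin κ}
    (hj : ρ ≤ j) : matHom A M x j = 0 := by
  rw [matHom_apply]
  exact Finset.sum_eq_zero fun i _ => by rw [hM i j (i.isLt.trans_le hj).ne, zero_smul]

theorem IsRectDiag.mem_ker_matHom_iff (hM : IsRectDiag M) (x : Fin ρ → A) :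
    x ∈ (matHom A M).ker ↔ ∀ i, diagEntry M i • x i = 0 := by
  rw [AddMonoidHom.mem_ker]
  constructor
  · intro hx i
    by_cases hi : (i : ℕ) < κ
    · rw [← hM.matHom_apply_of_val_eq x (j := ⟨i, hi⟩) rfl, hx, Pi.zero_apply]
    · rw [diagEntry_of_not_lt M hi, zero_smul]
  · intro hx
    funext j
    rcases lt_or_ge (j : ℕ) ρ with hj | hj
    · rw [hM.matHom_apply_of_val_eq x (i := ⟨j, hj⟩) rfl, hx, Pi.zero_apply]
    · exact hM.matHom_apply_of_le x hj

theorem card_zsmul_eq_zero [IsAddCyclic A] [Finite A] (c : ℤ) :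
    Nat.card {a : A // c • a = 0} = (Nat.card A).gcd c.natAbs := by
  rw [← IsAddCyclic.card_nsmulAddMonoidHom_ker]
  exact Nat.card_congr (Equiv.subtypeEquivRight fun a => natAbs_nsmul_eq_zero.symm)

theorem IsRectDiag.card_ker_matHom [IsAddCyclic A] [Finite A] (hM : IsRectDiag M) :
    Nat.card (matHom A M).ker = ∏ i, (Nat.card A).gcd (diagEntry M i).natAbs := by
  calc Nat.card (matHom A M).ker
      = Nat.card (∀ i, {a : A // diagEntry M i • a = 0}) :=
        Nat.card_congr ((Equiv.subtypeEquivRight hM.mem_ker_matHom_iff).trans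
          (Equiv.subtypePiEquivPi (p := fun i (a : A) => diagEntry M i • a = 0)))
    _ = ∏ i, (Nat.card A).gcd (diagEntry M i).natAbs := by
        simp only [Nat.card_pi, card_zsmul_eq_zero]

end Kernel

theorem natAbs_diagEntry_eq_of_card_ker_eq {ρ κ : ℕ} {D D' : Matrix (Fin ρ) (Fin κ) ℤ}
    (hD : IsRectDiag D) (hD' : IsRectDiag D')
    (hDchain : HasDvdChainDiag D) (hD'chain : HasDvdChainDiag D')
    (hcard : ∀ m : ℕ, IsPrimePow m →
      Nat.card (matHom (ZMod m) D).ker = Nat.card (matHom (ZMod m) D').ker) (i : Fin ρ) :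
    (diagEntry D i).natAbs = (diagEntry D' i).natAbs := by
  refine congrFun (eq_of_prod_gcd_eq_of_dvd_chain (c := fun i => (diagEntry D i).natAbs)
    (c' := fun i => (diagEntry D' i).natAbs) (s := {i | (i : ℕ) < κ})
    (fun _ _ hij hj => Int.natAbs_dvd_natAbs.2 (hDchain.diagEntry_dvd hij hj))
    (fun _ _ hij hj => Int.natAbs_dvd_natAbs.2 (hD'chain.diagEntry_dvd hij hj))
    (fun _ hi => by rw [diagEntry_of_not_lt D hi, diagEntry_of_not_lt D' hi]) fun m hm => ?_) i
  have : NeZero m := ⟨hm.ne_zero⟩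
  simpa only [hD.card_ker_matHom, hD'.card_ker_matHom, Nat.card_zmod] using hcard m hm

theorem diagonal_determined_by_kernels_general {ρ κ : ℕ} {D D' : Matrix (Fin ρ) (Fin κ) ℤ}
    (hDdiag : IsRectDiag D) (hD'diag : IsRectDiag D')
    (hDnonneg : ∀ (i : Fin ρ) (j : Fin κ), (i : ℕ) = (j : ℕ) → 0 ≤ D i j)
    (hD'nonneg : ∀ (i : Fin ρ) (j : Fin κ), (i : ℕ) = (j : ℕ) → 0 ≤ D' i j)
    (hDchain : HasDvdChainDiag D) (hD'chain : HasDvdChainDiag D')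
    (hcard : ∀ m : ℕ, IsPrimePow m →
      Nat.card (matHom (ZMod m) D).ker = Nat.card (matHom (ZMod m) D').ker) :
    D = D' := by
  refine hDdiag.ext_diagEntry hD'diag fun i => ?_
  have habs : (diagEntry D i).natAbs = (diagEntry D' i).natAbs :=
    natAbs_diagEntry_eq_of_card_ker_eq hDdiag hD'diag hDchain hD'chain hcard i
  exact (Int.natAbs_inj_of_nonneg_of_nonneg (diagEntry_nonneg hDnonneg i)
    (diagEntry_nonneg hD'nonneg i)).1 habs

/-- Two ρ×κ diagonal integer matrices with non-negative diagonal
entries forming a decreasing divisibility chain are equal as soon as the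
kernels of the induced homomorphisms `A^ρ → A^κ` are isomorphic for `A = ℚ`
and for `A = ℤ/mℤ` for every integer `m > 1`. -/
theorem diagonal_determined_by_kernels (ρ κ : ℕ)
    (D D' : Matrix (Fin ρ) (Fin κ) ℤ)
    (hDdiag : ∀ (i : Fin ρ) (j : Fin κ), (i : ℕ) ≠ (j : ℕ) → D i j = 0)
    (hD'diag : ∀ (i : Fin ρ) (j : Fin κ), (i : ℕ) ≠ (j : ℕ) → D' i j = 0)
    (hDnonneg : ∀ (i : Fin ρ) (j : Fin κ), (i : ℕ) = (j : ℕ) → 0 ≤ D i j)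
    (hD'nonneg : ∀ (i : Fin ρ) (j : Fin κ), (i : ℕ) = (j : ℕ) → 0 ≤ D' i j)
    (hDchain : ∀ (k : ℕ) (hk1 : k + 1 < ρ) (hk2 : k + 1 < κ),
      D ⟨k + 1, hk1⟩ ⟨k + 1, hk2⟩ ∣ D ⟨k, by omega⟩ ⟨k, by omega⟩)
    (hD'chain : ∀ (k : ℕ) (hk1 : k + 1 < ρ) (hk2 : k + 1 < κ),
      D' ⟨k + 1, hk1⟩ ⟨k + 1, hk2⟩ ∣ D' ⟨k, by omega⟩ ⟨k, by omega⟩)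
    (hQ : Nonempty ((matHom ℚ D).ker ≃+ (matHom ℚ D').ker))
    (hZmod : ∀ m : ℕ, 1 < m →
      Nonempty ((matHom (ZMod m) D).ker ≃+ (matHom (ZMod m) D').ker)) :
    D = D' := by
  exact diagonal_determined_by_kernels_general hDdiag hD'diag hDnonneg hD'nonneg hDchain hD'chain
    fun m hm => (hZmod m hm.one_lt).elim fun e => Nat.card_congr e.toEquiv
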